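/- Let p, q, r be distinct primes and G = C_p ⊕ C_q ⊕ C_r. If U is a minimal zero-sum sequence over G with k(U) = K(G), then U = g · U_p · U_q · U_r where g is a single element of order pqr = exp(G) and U_p, U_q, U_r are zero-sum free sequences over the p-primary, q-primary, and r-primary components of G respectively. -/

import Mathlib

/-- The cross number `k(S)` of a sequence (finite multiset) `S` over an additive group:
the sum, with multiplicity, of the reciprocals of the orders of its elements. -/
noncomputable def crossNum {G : Type*} [AddCommGroup G] (S : Multiset G) : ℝ :=
  (S.map fun g => ((addOrderOf g : ℝ))⁻¹).sum

/-- `S` is zero-sum free: no nonempty sub-multiset of `S` has sum `0`. -/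
def IsZeroSumFree {G : Type*} [AddCommGroup G] (S : Multiset G) : Prop :=
  ∀ T : Multiset G, T ≤ S → T ≠ 0 → T.sum ≠ 0

/-- The little cross number `k(G)`: the maximal cross number of a zero-sum free
sequence over `G`. -/
noncomputable def littleK (G : Type*) [AddCommGroup G] : ℝ :=
  sSup {x : ℝ | ∃ S : Multiset G, IsZeroSumFree S ∧ crossNum S = x}

/-- `S` is a minimal zero-sum sequence: nonempty, sum zero, and no nonempty proper
sub-multiset has sum `0`. -/
def IsMinZeroSum {G : Type*} [AddCommGroup G] (S : Multiset G) : Prop :=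
  S ≠ 0 ∧ S.sum = 0 ∧ ∀ T : Multiset G, T ≤ S → T ≠ 0 → T ≠ S → T.sum ≠ 0

/-- The cross number `K(G)`: the maximal cross number of a minimal zero-sum
sequence over `G`. -/
noncomputable def bigK (G : Type*) [AddCommGroup G] : ℝ :=
  sSup {x : ℝ | ∃ S : Multiset G, IsMinZeroSum S ∧ crossNum S = x}

/-! For distinct primes `p i` the order of `x : ∀ i, ZMod (p i)` is the product of the `p i` over
the support of `x`, so the cross number of a sequence depends only on the supports of its elements.

Let `U` be a minimal zero-sum sequence supported in `I` whose cross number is at least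
`∑ i ∈ I, (1 - 1 / p i) + ∏ i ∈ I, 1 / p i`.
* If `U` has `p i - 1` elements with support `{i}`, then by Cauchy–Davenport their subset sums fill
  `ZMod (p i)`, so forgetting these elements and the coordinate `i` of the others leaves a minimal
  zero-sum sequence; it is again at least as heavy as required over `I.erase i`, and equality there
  forces a single other element to have a nonzero `i`-th coordinate. Induct on `I`.
* If `U` has fewer than `p j - 1` elements with support `{j}` but `p j` elements with the same
  support `J ∋ j`, some of these sum to an element vanishing at `j`. Merging them does not lower the
  cross number and produces no element with support `{j}`, contradicting the structure of the
  shorter sequence.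
* Otherwise there are few elements of each support, and for at most three primes their total cross
  number is too small.
-/

section Multiset

variable {α β ι : Type*}

lemma exists_add_of_map_eq_add {f : α → β} {S : Multiset α} {X Y : Multiset β}
    (h : S.map f = X + Y) : ∃ X' Y', S = X' + Y' ∧ X'.map f = X ∧ Y'.map f = Y := by
  classical
  induction X using Multiset.induction_on generalizing S with
  | empty => exact ⟨0, S, by simp, by simp, by simpa using h⟩
  | cons b X ih =>
    rw [Multiset.cons_add, ← Multiset.map_eq_cons] at h
    obtain ⟨a, ha, rfl, hS⟩ := h
    obtain ⟨X', Y', hXY, rfl, rfl⟩ := ih hS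
    exact ⟨a ::ₘ X', Y', by rw [Multiset.cons_add, ← hXY, Multiset.cons_erase ha], by simp, rfl⟩

lemma exists_le_map_eq_of_le_map {f : α → β} {S : Multiset α} {T : Multiset β}
    (h : T ≤ S.map f) : ∃ T' ≤ S, T'.map f = T := by
  obtain ⟨Y, hY⟩ := Multiset.le_iff_exists_add.1 h
  obtain ⟨T', Y', rfl, rfl, -⟩ := exists_add_of_map_eq_add hY
  exact ⟨T', Multiset.le_add_right _ _, rfl⟩

lemma exists_le_of_le_count_map [DecidableEq β] {f : α → β} {S : Multiset α} {b : β} {n : ℕ}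
    (h : n ≤ (S.map f).count b) : ∃ T ≤ S, Multiset.card T = n ∧ ∀ x ∈ T, f x = b := by
  obtain ⟨T, hTS, hT⟩ := exists_le_map_eq_of_le_map (Multiset.le_count_iff_replicate_le.1 h)
  exact ⟨T, hTS, by simpa [Multiset.eq_replicate] using hT⟩

lemma exists_sum_of_map_eq_sum {f : α → β} {I : Finset ι} {B : ι → Multiset β}
    {S : Multiset α} (h : S.map f = ∑ i ∈ I, B i) :
    ∃ V : ι → Multiset α, S = ∑ i ∈ I, V i ∧ ∀ i ∈ I, (V i).map f = B i := by
  classical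
  induction I using Finset.induction_on generalizing S with
  | empty => exact ⟨0, by simpa using h, by simp⟩
  | insert i I hi ih =>
    rw [Finset.sum_insert hi] at h
    obtain ⟨X, Y, rfl, hX, hY⟩ := exists_add_of_map_eq_add h
    obtain ⟨V, rfl, hV⟩ := ih hY
    have hVi : ∀ j ∈ I, Function.update V i X j = V j := fun j hj =>
      Function.update_of_ne (ne_of_mem_of_not_mem hj hi) _ _
    refine ⟨Function.update V i X, ?_, ?_⟩
    · rw [Finset.sum_insert hi, Function.update_self, Finset.sum_congr rfl hVi]
    · simp only [Finset.forall_mem_insert, Function.update_self]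
      exact ⟨hX, fun j hj => by rw [hVi j hj, hV j hj]⟩

end Multiset

section ZeroSum

variable {G H : Type*} [AddCommGroup G] [AddCommGroup H]

lemma map_sum_eq_zero {f : G →+ H} {S : Multiset G} (h : ∀ x ∈ S, f x = 0) : f S.sum = 0 := by
  rw [map_multiset_sum]
  exact Multiset.sum_eq_zero (by simpa using h)

/-- Pigeonhole on the images of the `|H| + 1` initial partial sums. -/
lemma exists_le_map_sum_eq_zero [Finite H] (f : G →+ H) {S : Multiset G}
    (hS : Nat.card H ≤ Multiset.card S) :
    ∃ T ≤ S, T ≠ 0 ∧ Multiset.card T ≤ Nat.card H ∧ f T.sum = 0 := by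
  have := Fintype.ofFinite H
  induction S using Quotient.inductionOn with | _ l
  obtain ⟨i, j, hij, he⟩ := Fintype.exists_ne_map_eq_of_card_lt
    (fun i : Fin (Nat.card H + 1) => f (l.take i).sum) (by simp [Nat.card_eq_fintype_card])
  wlog hlt : i < j generalizing i j
  · exact this j i hij.symm he.symm (hij.symm.lt_of_le (not_lt.1 hlt))
  have hlt' : (i : ℕ) < j := hlt
  have hl : Nat.card H ≤ l.length := hS
  refine ⟨((l.take j).drop i : List G), ?_, ?_, ?_, ?_⟩
  · exact Multiset.coe_le.2 ((List.drop_sublist _ _).trans (List.take_sublist _ _)).subperm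
  · rw [← Multiset.card_pos, Multiset.coe_card, List.length_drop, List.length_take]
    omega
  · rw [Multiset.coe_card, List.length_drop, List.length_take]
    omega
  · have hsum : (l.take i).sum + ((l.take j).drop i).sum = (l.take j).sum := by
      rw [← List.sum_take_add_sum_drop (l.take j) i, List.take_take, min_eq_left hlt'.le]
    simpa [← hsum] using he

open scoped Pointwise in
lemma min_le_card_toFinset_map_sum_powerset {p : ℕ} (hp : p.Prime) {A : Multiset (ZMod p)}
    (hA : 0 ∉ A) :
    min p (Multiset.card A + 1) ≤ (A.powerset.map Multiset.sum).toFinset.card := by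
  induction A using Multiset.induction_on with
  | empty => simp
  | cons a A ih =>
    rw [Multiset.mem_cons, not_or] at hA
    set F := (A.powerset.map Multiset.sum).toFinset with hF
    have hne : F.Nonempty := ⟨0, by simpa [hF] using ⟨0, by simp⟩⟩
    have hFa : ((a ::ₘ A).powerset.map Multiset.sum).toFinset = F + {0, a} := by
      ext y
      simp only [hF, Finset.mem_add, Multiset.mem_toFinset, Multiset.powerset_cons,
        Multiset.map_add, Multiset.mem_add, Multiset.mem_map, Multiset.mem_powerset,
        Finset.mem_insert, Finset.mem_singleton]
      grind [Multiset.sum_cons, add_comm, add_zero]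
    have hcd := ZMod.cauchy_davenport hp hne (Finset.insert_nonempty 0 {a})
    rw [Finset.card_pair hA.1] at hcd
    rw [hFa, Multiset.card_cons]
    have := ih hA.2
    omega

lemma exists_le_sum_eq_of_prime {p : ℕ} (hp : p.Prime) {A : Multiset (ZMod p)} (hA : 0 ∉ A)
    (hc : p ≤ Multiset.card A + 1) (y : ZMod p) : ∃ X ≤ A, X.sum = y := by
  have : Fact p.Prime := ⟨hp⟩
  have hcard := min_le_card_toFinset_map_sum_powerset hp hA
  rw [min_eq_left hc] at hcard
  have huniv : (A.powerset.map Multiset.sum).toFinset = Finset.univ := by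
    rw [← Finset.card_eq_iff_eq_univ]
    exact (Finset.card_le_univ _).antisymm (by rwa [ZMod.card])
  simpa using huniv.ge (Finset.mem_univ y)

lemma isMinZeroSum_cons {g : G} {R : Multiset G} :
    IsMinZeroSum (g ::ₘ R) ↔ IsZeroSumFree R ∧ g + R.sum = 0 := by
  constructor
  · rintro ⟨-, hsum, hmin⟩
    refine ⟨fun T hT hT0 => hmin T (hT.trans (Multiset.le_cons_self _ _)) hT0 ?_,
      by simpa using hsum⟩
    rintro rfl
    simpa using Multiset.card_le_card hT
  · rintro ⟨hR, hsum⟩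
    refine ⟨Multiset.cons_ne_zero, by simpa using hsum, fun T hT hT0 hTU hTsum => ?_⟩
    by_cases hg : g ∈ T
    · obtain ⟨T, rfl⟩ := Multiset.exists_cons_of_mem hg
      obtain ⟨Y, rfl⟩ := Multiset.le_iff_exists_add.1 ((Multiset.cons_le_cons_iff g).1 hT)
      refine hR Y (Multiset.le_add_left _ _) (by rintro rfl; simp at hTU) ?_
      rwa [Multiset.sum_add, ← add_assoc, ← Multiset.sum_cons g T, hTsum, zero_add] at hsum
    · exact hR T ((Multiset.le_cons_of_notMem hg).1 hT) hT0 hTsum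

lemma IsZeroSumFree.of_le {S T : Multiset G} (hS : IsZeroSumFree S) (h : T ≤ S) :
    IsZeroSumFree T :=
  fun X hX => hS X (hX.trans h)

lemma IsMinZeroSum.eq_of_le {S T : Multiset G} (hS : IsMinZeroSum S) (hT : T ≤ S) (hT0 : T ≠ 0)
    (hsum : T.sum = 0) : T = S :=
  by_contra fun hTS => hS.2.2 T hT hT0 hTS hsum

lemma IsMinZeroSum.eq_singleton_zero {S : Multiset G} (hS : IsMinZeroSum S) (h0 : 0 ∈ S) :
    S = {0} :=
  (hS.eq_of_le (Multiset.singleton_le.2 h0) (Multiset.singleton_ne_zero 0) (by simp)).symm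

lemma IsMinZeroSum.sum_cons {T R : Multiset G} (hT : T ≠ 0) (h : IsMinZeroSum (T + R)) :
    IsMinZeroSum (T.sum ::ₘ R) := by
  refine isMinZeroSum_cons.2 ⟨fun X hX hX0 hXsum => hT ?_, by simpa using h.2.1⟩
  have hXTR := h.eq_of_le (hX.trans (Multiset.le_add_left _ _)) hX0 hXsum
  simpa [hXTR] using Multiset.card_le_card hX

lemma IsMinZeroSum.map_addEquiv {S : Multiset G} (hS : IsMinZeroSum S) (e : G ≃+ H) :
    IsMinZeroSum (S.map e) := by
  refine ⟨by simpa using hS.1, by simp [← map_multiset_sum, hS.2.1], fun T hT hT0 hTS hTsum => ?_⟩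
  obtain ⟨T, hTS', rfl⟩ := exists_le_map_eq_of_le_map hT
  rw [← map_multiset_sum, EmbeddingLike.map_eq_zero_iff] at hTsum
  exact hTS (congrArg _ (hS.eq_of_le hTS' (by simpa using hT0) hTsum))

/-- The subset sums of `A` fill the fibre `ZMod p`, so any zero-sum subsequence of the image of `R`
can be completed by a subsequence of `A` to a zero-sum subsequence of `A + R`. -/
lemma IsMinZeroSum.map_of_card_prime_le {p : ℕ} (hp : p.Prime) {f : G →+ ZMod p} {h : G →+ H}
    (hinj : ∀ x, f x = 0 → h x = 0 → x = 0) {A R : Multiset G} (hAR : IsMinZeroSum (A + R))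
    (hA : ∀ x ∈ A, f x ≠ 0 ∧ h x = 0) (hc : p ≤ Multiset.card A + 1) (hR : R ≠ 0) :
    IsMinZeroSum (R.map h) := by
  have hker : ∀ X ≤ A, h X.sum = 0 := fun X hX =>
    map_sum_eq_zero fun x hx => (hA x (Multiset.mem_of_le hX hx)).2
  refine ⟨by simpa using hR, ?_, fun T hT hT0 hTR hTsum => ?_⟩
  · simpa [← map_multiset_sum, hker A le_rfl] using congrArg h hAR.2.1
  obtain ⟨T, hTR', rfl⟩ := exists_le_map_eq_of_le_map hT
  rw [← map_multiset_sum] at hTsum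
  obtain ⟨X, hX, hXsum⟩ := exists_le_sum_eq_of_prime hp (A := A.map f)
    (by simpa using fun x hx => (hA x hx).1) (by simpa using hc) (-f T.sum)
  obtain ⟨X, hXA, rfl⟩ := exists_le_map_eq_of_le_map hX
  rw [← map_multiset_sum] at hXsum
  have hzero : (X + T).sum = 0 := hinj _ (by simp [hXsum]) (by simp [hker X hXA, hTsum])
  have hT0' : X + T ≠ 0 := fun h0 => by simp_all
  have hcard := congrArg Multiset.card (hAR.eq_of_le (add_le_add hXA hTR') hT0' hzero)
  simp only [Multiset.card_add] at hcard
  have hXc := Multiset.card_le_card hXA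
  exact hTR (congrArg _ (Multiset.eq_of_le_of_card_le hTR' (by omega)))

end ZeroSum

section Support

variable {ι : Type*} {p : ι → ℕ} [Fintype ι]

/-- The set of nonzero coordinates of an element of `∏ i, ZMod (p i)`. When the `p i` are distinct
primes it determines the order of the element. -/
def supp (x : ∀ i, ZMod (p i)) : Finset ι := {i | x i ≠ 0}

@[simp] lemma mem_supp {x : ∀ i, ZMod (p i)} {i : ι} : i ∈ supp x ↔ x i ≠ 0 := by
  simp [supp]

lemma supp_eq_empty {x : ∀ i, ZMod (p i)} : supp x = ∅ ↔ x = 0 := by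
  simp [Finset.eq_empty_iff_forall_notMem, funext_iff]

lemma supp_single [DecidableEq ι] {i : ι} {a : ZMod (p i)} (ha : a ≠ 0) :
    supp (Pi.single i a) = {i} := by
  ext j
  obtain rfl | hj := eq_or_ne j i <;> simp [*]

lemma supp_sum_subset {T : Multiset (∀ i, ZMod (p i))} {J : Finset ι}
    (h : ∀ x ∈ T, supp x ⊆ J) : supp T.sum ⊆ J := fun i hi => by
  by_contra hiJ
  refine mem_supp.1 hi (map_sum_eq_zero (f := Pi.evalAddMonoidHom _ i) (S := T) fun x hx => ?_)
  by_contra hxi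
  exact hiJ (h x hx (mem_supp.2 hxi))

lemma addOrderOf_eq_prod_supp [∀ i, Fact (p i).Prime] (hp : Function.Injective p)
    (x : ∀ i, ZMod (p i)) : addOrderOf x = ∏ i ∈ supp x, p i := by
  have horder (i : ι) : addOrderOf (x i) = if x i ≠ 0 then p i else 1 := by
    split_ifs with h
    · exact addOrderOf_eq_prime (by simp) h
    · simpa using h
  rw [Pi.addOrderOf, supp, Finset.prod_filter, Finset.lcm_eq_prod]
  · exact Finset.prod_congr rfl fun i _ => horder i
  · intro i _ j _ hij
    have hcop := (Nat.coprime_primes Fact.out Fact.out).2 (hp.ne hij)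
    rw [Function.onFun_apply, horder i, horder j]
    split_ifs
    exacts [hcop, Nat.coprime_one_right _, Nat.coprime_one_left _, Nat.coprime_one_left _]

end Support

section EraseCoord

variable {ι : Type*} {p : ι → ℕ} [DecidableEq ι]

/-- The endomorphism of `∏ i, ZMod (p i)` that replaces the `i`-th coordinate by `0`. -/
def eraseCoord (i : ι) : (∀ j, ZMod (p j)) →+ ∀ j, ZMod (p j) :=
  AddMonoidHom.pi fun j => if j = i then 0 else Pi.evalAddMonoidHom _ j

lemma eraseCoord_apply (i j : ι) (x : ∀ j, ZMod (p j)) :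
    eraseCoord i x j = if j = i then 0 else x j := by
  rw [eraseCoord, AddMonoidHom.pi_apply]
  split_ifs <;> rfl

lemma eraseCoord_eq_self {i : ι} {x : ∀ j, ZMod (p j)} (h : x i = 0) : eraseCoord i x = x := by
  ext j
  obtain rfl | hj := eq_or_ne j i <;> simp [eraseCoord_apply, *]

lemma supp_eraseCoord [Fintype ι] (i : ι) (x : ∀ j, ZMod (p j)) :
    supp (eraseCoord i x) = (supp x).erase i := by
  ext j
  by_cases h : j = i <;> simp [eraseCoord_apply, h]

end EraseCoord

section Weight

variable {ι : Type*} {p : ι → ℕ} {I J : Finset ι} {i j : ι}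

/-- The contribution `∏ j ∈ J, 1 / p j` to the cross number of an element with support `J`. -/
noncomputable def suppWeight (p : ι → ℕ) (J : Finset ι) : ℝ := ∏ j ∈ J, (p j : ℝ)⁻¹

/-- The cross number of a sequence over `∏ i, ZMod (p i)` for distinct primes `p i`, read off from
the supports of its elements. -/
noncomputable def weight [Fintype ι] (U : Multiset (∀ i, ZMod (p i))) : ℝ :=
  (U.map fun x => suppWeight p (supp x)).sum

/-- The cross number `∑ i ∈ I, (1 - 1 / p i) + ∏ i ∈ I, 1 / p i` of a sequence made of one element
with support `I` and `p i - 1` elements with support `{i}` for each `i ∈ I`. -/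
noncomputable def standardWeight (p : ι → ℕ) (I : Finset ι) : ℝ :=
  ∑ i ∈ I, (1 - (p i : ℝ)⁻¹) + suppWeight p I

lemma suppWeight_empty : suppWeight p ∅ = 1 := Finset.prod_empty

lemma suppWeight_singleton : suppWeight p {i} = (p i : ℝ)⁻¹ := Finset.prod_singleton _ _

lemma suppWeight_eq_mul_erase [DecidableEq ι] (hi : i ∈ I) :
    suppWeight p I = (p i : ℝ)⁻¹ * suppWeight p (I.erase i) :=
  (Finset.mul_prod_erase _ _ hi).symm

lemma standardWeight_eq_erase_add [DecidableEq ι] (hi : i ∈ I) : standardWeight p I =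
    standardWeight p (I.erase i) + (1 - (p i : ℝ)⁻¹) * (1 - suppWeight p (I.erase i)) := by
  rw [standardWeight, standardWeight, suppWeight_eq_mul_erase hi, ← Finset.add_sum_erase _ _ hi]
  ring

lemma weight_add [Fintype ι] (U V : Multiset (∀ i, ZMod (p i))) :
    weight (U + V) = weight U + weight V := by
  simp [weight]

lemma weight_cons [Fintype ι] (x : ∀ i, ZMod (p i)) (U : Multiset (∀ i, ZMod (p i))) :
    weight (x ::ₘ U) = suppWeight p (supp x) + weight U := by
  simp [weight]

lemma weight_singleton [Fintype ι] (x : ∀ i, ZMod (p i)) :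
    weight {x} = suppWeight p (supp x) := by
  simp [weight]

lemma weight_eq_sum_map_supp [Fintype ι] (U : Multiset (∀ i, ZMod (p i))) :
    weight U = ((U.map supp).map (suppWeight p)).sum := by
  rw [Multiset.map_map]
  rfl

lemma weight_eq_card_mul [Fintype ι] {U : Multiset (∀ i, ZMod (p i))}
    (hU : ∀ x ∈ U, supp x = J) : weight U = Multiset.card U * suppWeight p J := by
  rw [weight, Multiset.map_congr rfl fun x hx => congrArg _ (hU x hx)]
  simp

variable [∀ i, Fact (p i).Prime]

lemma crossNum_eq_weight [Fintype ι] (hp : Function.Injective p)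
    (U : Multiset (∀ i, ZMod (p i))) : crossNum U = weight U := by
  simp [crossNum, weight, suppWeight, addOrderOf_eq_prod_supp hp]

lemma inv_cast_pos (i : ι) : 0 < (p i : ℝ)⁻¹ :=
  inv_pos.2 (Nat.cast_pos.2 (NeZero.pos (p i)))

lemma inv_cast_lt_one (i : ι) : (p i : ℝ)⁻¹ < 1 :=
  inv_lt_one_of_one_lt₀ (Nat.one_lt_cast.2 (Fact.out : (p i).Prime).one_lt)

lemma pred_mul_inv_cast (i : ι) : ((p i - 1 : ℕ) : ℝ) * (p i : ℝ)⁻¹ = 1 - (p i : ℝ)⁻¹ := by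
  rw [Nat.cast_pred (NeZero.pos (p i)), sub_mul, one_mul, mul_inv_cancel₀ (NeZero.ne _)]

lemma suppWeight_pos (J : Finset ι) : 0 < suppWeight p J :=
  Finset.prod_pos fun j _ => inv_cast_pos j

lemma suppWeight_strictAnti : StrictAnti (suppWeight p) := by
  refine Finset.strictAnti_iff_forall_cons_lt.2 fun J j hj => ?_
  rw [suppWeight, Finset.prod_cons]
  exact mul_lt_of_lt_one_left (suppWeight_pos J) (inv_cast_lt_one j)

lemma suppWeight_le_one (J : Finset ι) : suppWeight p J ≤ 1 := by
  simpa [suppWeight] using suppWeight_strictAnti.antitone (Finset.empty_subset J)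

lemma suppWeight_lt_one (hJ : J.Nonempty) : suppWeight p J < 1 := by
  simpa [suppWeight] using suppWeight_strictAnti (p := p) (Finset.empty_ssubset.2 hJ)

lemma one_le_standardWeight (I : Finset ι) : 1 ≤ standardWeight p I := by
  classical
  induction I using Finset.induction_on with
  | empty => simp [standardWeight, suppWeight]
  | insert i I hi ih =>
    rw [standardWeight_eq_erase_add (Finset.mem_insert_self i I), Finset.erase_insert hi]
    have := mul_nonneg (sub_nonneg.2 (inv_cast_lt_one (p := p) i).le)
      (sub_nonneg.2 (suppWeight_le_one (p := p) I))
    linarith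

lemma one_lt_standardWeight (hI : 1 < I.card) : 1 < standardWeight p I := by
  classical
  obtain ⟨i, hi, j, hj, hij⟩ := Finset.one_lt_card.1 hI
  have hw : suppWeight p (I.erase i) < 1 := suppWeight_lt_one ⟨j, Finset.mem_erase.2 ⟨hij.symm, hj⟩⟩
  have := mul_pos (sub_pos.2 (inv_cast_lt_one (p := p) i)) (sub_pos.2 hw)
  rw [standardWeight_eq_erase_add hi]
  linarith [one_le_standardWeight (p := p) (I.erase i)]

lemma suppWeight_le_weight [Fintype ι] {S : Multiset (∀ i, ZMod (p i))} (hS : S ≠ 0)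
    (hI : ∀ x ∈ S, supp x ⊆ I) : suppWeight p I ≤ weight S := by
  obtain ⟨x, hx⟩ := Multiset.exists_mem_of_ne_zero hS
  refine (suppWeight_strictAnti.antitone (hI x hx)).trans
    (Multiset.single_le_sum ?_ _ (Multiset.mem_map_of_mem _ hx))
  simpa using fun y _ => (suppWeight_pos (supp y)).le

lemma exists_eq_singleton_of_weight_le [Fintype ι] {S : Multiset (∀ i, ZMod (p i))} (hS : S ≠ 0)
    (hI : ∀ x ∈ S, supp x ⊆ I) (hw : weight S ≤ suppWeight p I) :
    ∃ y, S = {y} ∧ supp y = I := by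
  obtain ⟨y, hy⟩ := Multiset.exists_mem_of_ne_zero hS
  obtain ⟨R, rfl⟩ := Multiset.exists_cons_of_mem hy
  rw [weight_cons] at hw
  obtain rfl : R = 0 := by
    by_contra hR
    have hRI := suppWeight_le_weight hR fun x hx => hI x (Multiset.mem_cons_of_mem hx)
    linarith [suppWeight_pos (p := p) (supp y), suppWeight_strictAnti (p := p).antitone (hI y hy)]
  refine ⟨y, rfl, (hI y hy).eq_of_not_ssubset fun hlt => ?_⟩
  have := suppWeight_strictAnti (p := p) hlt
  simp only [weight, Multiset.map_zero, Multiset.sum_zero] at hw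
  linarith

end Weight

section Standard

variable {ι : Type*} [Fintype ι] {p : ι → ℕ} {I J : Finset ι} {i j : ι}
  {U A T R : Multiset (∀ i, ZMod (p i))}

/-- `U` consists of one element with support `I` and, for each `i ∈ I`, of `p i - 1` elements with
support `{i}`: the shape of the minimal zero-sum sequences of maximal cross number. -/
def IsStandard (I : Finset ι) (U : Multiset (∀ i, ZMod (p i))) : Prop :=
  U.map supp = I ::ₘ ∑ i ∈ I, Multiset.replicate (p i - 1) {i}

lemma IsStandard.le_count [DecidableEq ι] (hU : IsStandard I U) (hi : i ∈ I) :
    p i - 1 ≤ (U.map supp).count {i} := by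
  rw [hU, Multiset.le_count_iff_replicate_le]
  exact (Finset.single_le_sum (f := fun i => Multiset.replicate (p i - 1) ({i} : Finset ι))
    (fun _ _ => Multiset.zero_le _) hi).trans (Multiset.le_cons_self _ _)

variable [∀ i, Fact (p i).Prime]

lemma IsStandard.weight_eq (hU : IsStandard I U) : weight U = standardWeight p I := by
  rw [weight_eq_sum_map_supp, hU, Multiset.map_cons, Multiset.sum_cons,
    ← Multiset.coe_mapAddMonoidHom, map_sum, ← Multiset.coe_sumAddMonoidHom, map_sum,
    standardWeight, add_comm]
  simp [suppWeight_singleton, pred_mul_inv_cast]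

/-- A minimal zero-sum sequence over `∏ i ∈ I, ZMod (p i)` that weighs at least as much as a
standard one. The trivial sequence `{0}` is excluded unless `I = ∅`: it has weight `1`, which is
also the standard weight of a singleton. -/
structure IsHeavy (I : Finset ι) (U : Multiset (∀ i, ZMod (p i))) : Prop where
  isMinZeroSum : IsMinZeroSum U
  supp_subset : ∀ x ∈ U, supp x ⊆ I
  eq_empty : 0 ∈ U → I = ∅
  le_weight : standardWeight p I ≤ weight U

lemma IsHeavy.one_le_weight (hU : IsHeavy I U) : 1 ≤ weight U :=
  (one_le_standardWeight I).trans hU.le_weight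

lemma IsHeavy.isStandard_empty (hU : IsHeavy ∅ U) : IsStandard ∅ U := by
  obtain ⟨x, hx⟩ := Multiset.exists_mem_of_ne_zero hU.isMinZeroSum.1
  obtain rfl := supp_eq_empty.1 (Finset.subset_empty.1 (hU.supp_subset x hx))
  simp [IsStandard, hU.isMinZeroSum.eq_singleton_zero hx, supp_eq_empty.2]

lemma weight_eq_of_card_add_one (hA : ∀ x ∈ A, supp x = {i}) (hc : Multiset.card A + 1 = p i) :
    weight A = 1 - (p i : ℝ)⁻¹ := by
  rw [weight_eq_card_mul hA, suppWeight_singleton, ← pred_mul_inv_cast, ← hc,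
    Nat.add_sub_cancel]

lemma IsHeavy.exists_coord_ne_zero (hU : IsHeavy I (A + R)) (hA : ∀ x ∈ A, supp x = {i})
    (hc : Multiset.card A + 1 = p i) : ∃ x ∈ R, x i ≠ 0 := by
  by_contra! hR
  have hAi : A.sum i = 0 := by
    have hRi : R.sum i = 0 := map_sum_eq_zero (f := Pi.evalAddMonoidHom _ i) (S := R) hR
    simpa [hRi] using congrFun hU.isMinZeroSum.2.1 i
  have hAsum : A.sum = 0 := by
    refine supp_eq_empty.1 (Finset.eq_empty_of_forall_notMem fun j hj => ?_)
    obtain rfl := Finset.mem_singleton.1 (supp_sum_subset (fun x hx => (hA x hx).subset) hj)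
    exact mem_supp.1 hj hAi
  have hA0 : A ≠ 0 := by
    rintro rfl
    exact (Fact.out : (p i).Prime).one_lt.ne' (by simpa using hc.symm)
  have hwA : weight A = weight (A + R) :=
    congrArg _ (hU.isMinZeroSum.eq_of_le (Multiset.le_add_right A R) hA0 hAsum)
  have hpos := suppWeight_pos (p := p) {i}
  rw [suppWeight_singleton] at hpos
  linarith [weight_eq_of_card_add_one hA hc, hU.one_le_weight]

lemma IsHeavy.sum_cons (hU : IsHeavy I (T + R)) (hT : T ≠ 0) (hTJ : ∀ x ∈ T, supp x = J)
    (hJ : 1 < J.card) (hj : j ∈ J) (hc : Multiset.card T ≤ p j) (hsum : T.sum j = 0) :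
    IsHeavy I (T.sum ::ₘ R) := by
  classical
  have hpos := suppWeight_pos (p := p) J
  have hwT : weight T ≤ suppWeight p (J.erase j) := by
    have hpj : (p j : ℝ) ≠ 0 := NeZero.ne _
    calc weight T = Multiset.card T * suppWeight p J := weight_eq_card_mul hTJ
      _ ≤ p j * suppWeight p J := by gcongr
      _ = suppWeight p (J.erase j) := by rw [suppWeight_eq_mul_erase hj, mul_inv_cancel_left₀ hpj]
  refine ⟨hU.isMinZeroSum.sum_cons hT, ?_, fun h0 => ?_, hU.le_weight.trans ?_⟩
  · rw [Multiset.forall_mem_cons]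
    exact ⟨supp_sum_subset fun x hx => hU.supp_subset x (by simp [hx]),
      fun x hx => hU.supp_subset x (by simp [hx])⟩
  · obtain h0 | h0 := Multiset.mem_cons.1 h0
    · have hTU := hU.isMinZeroSum.eq_of_le (Multiset.le_add_right T R) hT h0.symm
      have hlt : suppWeight p (J.erase j) < 1 := suppWeight_lt_one (by
        rw [← Finset.card_pos, Finset.card_erase_of_mem hj]
        omega)
      linarith [hU.one_le_weight, congrArg weight hTU]
    · exact hU.eq_empty (by simp [h0])
  · have hsub : supp T.sum ⊆ J.erase j := Finset.subset_erase.2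
      ⟨supp_sum_subset fun x hx => (hTJ x hx).subset, by simpa using hsum⟩
    rw [weight_add, weight_cons]
    linarith [suppWeight_strictAnti (p := p).antitone hsub]

variable [DecidableEq ι]

lemma weight_map_eraseCoord (i : ι) (R : Multiset (∀ i, ZMod (p i))) :
    weight (R.map (eraseCoord i)) =
      weight R + (1 - (p i : ℝ)⁻¹) * weight ((R.filter (· i ≠ 0)).map (eraseCoord i)) := by
  induction R using Multiset.induction_on with
  | empty => simp [weight]
  | cons x R ih =>
    by_cases hx : x i = 0
    · rw [Multiset.map_cons, weight_cons, weight_cons, ih, eraseCoord_eq_self hx,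
        Multiset.filter_cons_of_neg (p := (· i ≠ 0)) R (not_not.2 hx), add_assoc]
    · rw [Multiset.map_cons, weight_cons, weight_cons, ih, supp_eraseCoord,
        Multiset.filter_cons_of_pos (p := (· i ≠ 0)) R hx, Multiset.map_cons, weight_cons,
        supp_eraseCoord, suppWeight_eq_mul_erase (mem_supp.2 hx)]
      ring

lemma IsHeavy.le_weight_map_eraseCoord (hU : IsHeavy I (A + R)) (hi : i ∈ I)
    (hA : ∀ x ∈ A, supp x = {i}) (hc : Multiset.card A + 1 = p i) :
    standardWeight p (I.erase i) + (1 - (p i : ℝ)⁻¹) *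
      (weight ((R.filter (· i ≠ 0)).map (eraseCoord i)) - suppWeight p (I.erase i)) ≤
        weight (R.map (eraseCoord i)) := by
  have hw := hU.le_weight
  rw [standardWeight_eq_erase_add hi, weight_add, weight_eq_of_card_add_one hA hc] at hw
  rw [weight_map_eraseCoord i R]
  linarith

lemma IsHeavy.isMinZeroSum_map_eraseCoord (hU : IsHeavy I (A + R)) (hA : ∀ x ∈ A, supp x = {i})
    (hc : Multiset.card A + 1 = p i) : IsMinZeroSum (R.map (eraseCoord i)) := by
  obtain ⟨x, hxR, -⟩ := hU.exists_coord_ne_zero hA hc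
  have hA' : ∀ y ∈ A, y i ≠ 0 ∧ eraseCoord i y = 0 := fun y hy =>
    ⟨mem_supp.1 (hA y hy ▸ Finset.mem_singleton_self i),
      by rw [← supp_eq_empty, supp_eraseCoord, hA y hy, Finset.erase_singleton]⟩
  refine hU.isMinZeroSum.map_of_card_prime_le (p := p i) Fact.out
    (f := Pi.evalAddMonoidHom _ i) (fun y hyi hy => ?_) hA' hc.ge ?_
  · rwa [eraseCoord_eq_self (i := i) hyi] at hy
  · rintro rfl
    simp at hxR

lemma IsHeavy.map_eraseCoord (hU : IsHeavy I (A + R)) (hi : i ∈ I)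
    (hA : ∀ x ∈ A, supp x = {i}) (hc : Multiset.card A + 1 = p i) :
    IsHeavy (I.erase i) (R.map (eraseCoord i)) := by
  have hV := hU.isMinZeroSum_map_eraseCoord hA hc
  have hsupp : ∀ y ∈ R.map (eraseCoord i), supp y ⊆ I.erase i := by
    simp only [Multiset.mem_map, forall_exists_index, and_imp, forall_apply_eq_imp_iff₂,
      supp_eraseCoord]
    exact fun y hy => Finset.erase_subset_erase i (hU.supp_subset y (by simp [hy]))
  have hwV := hU.le_weight_map_eraseCoord hi hA hc
  set E := (R.filter (· i ≠ 0)).map (eraseCoord i) with hE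
  have hE0 : E ≠ 0 := by
    simpa [hE, Multiset.filter_eq_nil] using hU.exists_coord_ne_zero hA hc
  have hEle : E ≤ R.map (eraseCoord i) := Multiset.map_le_map (Multiset.filter_le _ R)
  have hcoef : 0 < 1 - (p i : ℝ)⁻¹ := sub_pos.2 (inv_cast_lt_one i)
  refine ⟨hV, hsupp, fun h0 => ?_, ?_⟩
  · have hV0 := hV.eq_singleton_zero h0
    have hE1 : E = {0} := (Multiset.le_singleton.1 (hV0 ▸ hEle)).resolve_left hE0
    rw [hE1, hV0, weight_singleton, supp_eq_empty.2 rfl, suppWeight_empty] at hwV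
    by_contra hI
    have hlt := suppWeight_lt_one (p := p) (Finset.nonempty_iff_ne_empty.2 hI)
    linarith [one_le_standardWeight (p := p) (I.erase i), mul_pos hcoef (sub_pos.2 hlt)]
  · have hwE := suppWeight_le_weight hE0 fun y hy => hsupp y (Multiset.mem_of_le hEle hy)
    linarith [mul_nonneg hcoef.le (sub_nonneg.2 hwE)]

lemma IsHeavy.exists_eq_cons (hU : IsHeavy I (A + R)) (hi : i ∈ I)
    (hA : ∀ x ∈ A, supp x = {i}) (hc : Multiset.card A + 1 = p i)
    (hV : weight (R.map (eraseCoord i)) = standardWeight p (I.erase i)) :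
    ∃ x R', R = x ::ₘ R' ∧ supp x = I ∧ ∀ z ∈ R', z i = 0 := by
  set E := R.filter (· i ≠ 0) with hE
  have hE0 : E.map (eraseCoord i) ≠ 0 := by
    simpa [hE, Multiset.filter_eq_nil] using hU.exists_coord_ne_zero hA hc
  have hsupp : ∀ y ∈ E.map (eraseCoord i), supp y ⊆ I.erase i := fun y hy =>
    (hU.map_eraseCoord hi hA hc).supp_subset y
      (Multiset.mem_of_le (Multiset.map_le_map (Multiset.filter_le _ R)) hy)
  have hwE : weight (E.map (eraseCoord i)) ≤ suppWeight p (I.erase i) := by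
    have hle := hU.le_weight_map_eraseCoord hi hA hc
    rw [hV, add_le_iff_nonpos_right] at hle
    exact sub_nonpos.1 (nonpos_of_mul_nonpos_right hle (sub_pos.2 (inv_cast_lt_one i)))
  obtain ⟨y, hEy, hy⟩ := exists_eq_singleton_of_weight_le hE0 hsupp hwE
  obtain ⟨x, hEx, rfl⟩ := Multiset.map_eq_singleton.1 hEy
  have hxE : x ∈ E := hEx ▸ Multiset.mem_singleton_self x
  refine ⟨x, R.filter (¬ · i ≠ 0), ?_, ?_, fun z hz => not_not.1 (Multiset.mem_filter.1 hz).2⟩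
  · rw [← Multiset.singleton_add, ← hEx, Multiset.filter_add_not]
  · rw [← Finset.insert_erase hi, ← hy, supp_eraseCoord,
      Finset.insert_erase (mem_supp.2 (Multiset.mem_filter.1 hxE).2)]

lemma IsHeavy.isStandard_of_map_eraseCoord (hU : IsHeavy I (A + R)) (hi : i ∈ I)
    (hA : ∀ x ∈ A, supp x = {i}) (hc : Multiset.card A + 1 = p i)
    (hV : IsStandard (I.erase i) (R.map (eraseCoord i))) : IsStandard I (A + R) := by
  obtain ⟨x, R', rfl, hx, hR'⟩ := hU.exists_eq_cons hi hA hc hV.weight_eq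
  have hR'self : R'.map (eraseCoord i) = R' :=
    (Multiset.map_congr rfl fun z hz => eraseCoord_eq_self (hR' z hz)).trans (Multiset.map_id' _)
  have hR'supp : R'.map supp = ∑ j ∈ I.erase i, Multiset.replicate (p j - 1) {j} := by
    rwa [IsStandard, Multiset.map_cons, Multiset.map_cons, hR'self, supp_eraseCoord, hx,
      Multiset.cons_inj_right] at hV
  have hAsupp : A.map supp = Multiset.replicate (p i - 1) {i} :=
    Multiset.eq_replicate.2 ⟨by simp [← hc], by simpa using hA⟩
  rw [IsStandard, Multiset.map_add, hAsupp, Multiset.map_cons, hx, hR'supp, Multiset.add_cons,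
    Finset.add_sum_erase I (fun j => Multiset.replicate (p j - 1) ({j} : Finset ι)) hi]

lemma IsHeavy.count_lt (hU : IsHeavy I U)
    (ih : ∀ V : Multiset (∀ i, ZMod (p i)), Multiset.card V < Multiset.card U →
      IsHeavy I V → IsStandard I V)
    (hJ : 1 < J.card) (hj : j ∈ J) (hcount : (U.map supp).count {j} + 1 < p j) :
    (U.map supp).count J < p j := by
  by_contra! hle
  obtain ⟨S, hSU, hcS, hSJ⟩ := exists_le_of_le_count_map hle
  obtain ⟨T, hTS, hT, hcT, hsum⟩ := exists_le_map_sum_eq_zero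
    (Pi.evalAddMonoidHom (fun j => ZMod (p j)) j) (S := S) (by simp [hcS])
  rw [Nat.card_zmod] at hcT
  obtain ⟨R, rfl⟩ := Multiset.le_iff_exists_add.1 (hTS.trans hSU)
  have hTJ : ∀ x ∈ T, supp x = J := fun x hx => hSJ x (Multiset.mem_of_le hTS hx)
  have hjT : ∀ x ∈ T, x j ≠ 0 := fun x hx => mem_supp.1 (hTJ x hx ▸ hj)
  obtain ⟨x, hx⟩ := Multiset.exists_mem_of_ne_zero hT
  have hjI : j ∈ I := hU.supp_subset x (by simp [hx]) (hTJ x hx ▸ hj)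
  have hT1 : 1 < Multiset.card T := by
    by_contra! h1
    obtain ⟨x, rfl⟩ := Multiset.card_eq_one.1 (h1.antisymm (Multiset.card_pos.2 hT))
    exact hjT x (Multiset.mem_singleton_self x) (by simpa using hsum)
  have hstd : IsStandard I (T.sum ::ₘ R) :=
    ih _ (by rw [Multiset.card_cons, Multiset.card_add]; omega)
      (hU.sum_cons hT hTJ hJ hj hcT hsum)
  have hjs : j ∉ supp T.sum := fun h => mem_supp.1 h hsum
  have hne : {j} ≠ supp T.sum := fun h => hjs (h ▸ Finset.mem_singleton_self j)
  have hcount' := hstd.le_count hjI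
  rw [Multiset.map_cons, Multiset.count_cons_of_ne hne] at hcount'
  rw [Multiset.map_add, Multiset.count_add] at hcount
  omega

end Standard

section Counting

variable {ι : Type*} {p : ι → ℕ} {I J : Finset ι} {j : ι}

lemma sum_powerset_eq_add_sum_one_lt_card {M : Type*} [AddCommMonoid M] (I : Finset ι)
    (f : Finset ι → M) :
    ∑ J ∈ I.powerset, f J = f ∅ + ∑ i ∈ I, f {i} + ∑ J ∈ I.powerset with 1 < J.card, f J := by
  classical
  have hsmall : {J ∈ I.powerset | ¬1 < J.card} =
      insert ∅ (I.map ⟨singleton, Finset.singleton_injective⟩) := by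
    ext J
    simp only [Finset.mem_filter, Finset.mem_powerset, not_lt, Finset.mem_insert, Finset.mem_map,
      Function.Embedding.coeFn_mk]
    constructor
    · rintro ⟨hJI, hJ⟩
      obtain rfl | ⟨i, hi⟩ := J.eq_empty_or_nonempty
      · exact .inl rfl
      · exact .inr ⟨i, hJI hi, (Finset.eq_singleton_iff_unique_mem.2
          ⟨hi, fun k hk => Finset.card_le_one.1 hJ k hk i hi⟩).symm⟩
    · rintro (rfl | ⟨i, hi, rfl⟩) <;> simp [*]
  rw [← Finset.sum_filter_not_add_sum_filter _ (fun J => 1 < J.card), hsmall,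
    Finset.sum_insert (by simp), Finset.sum_map]
  rfl

/-- An upper bound for the total weight of the elements with at least two nonzero coordinates, in a
sequence over `∏ i ∈ I, ZMod (p i)` having fewer than `min {p j | j ∈ J}` elements with support
`J` for each such `J`. -/
noncomputable def mixedBound (p : ι → ℕ) (I : Finset ι) : ℝ :=
  ∑ J ∈ I.powerset with 1 < J.card, ((sInf (p '' J) : ℕ) - 1 : ℝ) * suppWeight p J

/-- The condition on the primes under which counting elements by their supports shows that a
sequence with fewer than `p i - 1` elements with support `{i}` is too light to be maximal. -/
def MixedGap (p : ι → ℕ) : Prop :=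
  ∀ I : Finset ι, I.Nonempty → mixedBound p I < ∑ i ∈ I, (p i : ℝ)⁻¹ + suppWeight p I

lemma sInf_sub_one_mul_suppWeight_le [DecidableEq ι] [∀ i, Fact (p i).Prime] (hj : j ∈ J) :
    ((sInf (p '' J) : ℕ) - 1 : ℝ) * suppWeight p J ≤
      suppWeight p (J.erase j) - suppWeight p J := by
  have hle : (sInf (p '' J) : ℕ) ≤ p j := Nat.sInf_le (Set.mem_image_of_mem p hj)
  have hpj : (p j : ℝ) ≠ 0 := NeZero.ne _
  have hpos := suppWeight_pos (p := p) J
  calc ((sInf (p '' J) : ℕ) - 1 : ℝ) * suppWeight p J ≤ (p j - 1) * suppWeight p J := by gcongr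
    _ = suppWeight p (J.erase j) - suppWeight p J := by
      rw [sub_mul, one_mul, suppWeight_eq_mul_erase hj, mul_inv_cancel_left₀ hpj]

lemma mixedBound_empty : mixedBound p ∅ = 0 := by
  simp [mixedBound, Finset.sum_filter]

lemma mixedBound_insert_le [DecidableEq ι] [∀ i, Fact (p i).Prime] (hj : j ∉ I) :
    mixedBound p (insert j I) ≤
      mixedBound p I + (1 - (p j : ℝ)⁻¹) * (∏ i ∈ I, (1 + (p i : ℝ)⁻¹) - 1) := by
  have hsum : ∑ J ∈ I.powerset.erase ∅, suppWeight p J = ∏ i ∈ I, (1 + (p i : ℝ)⁻¹) - 1 := by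
    rw [Finset.prod_one_add, ← suppWeight_empty (p := p)]
    exact Finset.sum_erase_eq_sub (Finset.empty_mem_powerset I)
  rw [mixedBound, Finset.sum_filter, Finset.sum_powerset_insert hj, ← Finset.sum_filter,
    ← mixedBound, ← hsum, Finset.mul_sum,
    ← Finset.sum_erase (a := ∅) I.powerset (by simp)]
  refine add_le_add_right (Finset.sum_le_sum fun J hJ => ?_) _
  have hjJ : j ∉ J := fun h => hj (Finset.mem_powerset.1 (Finset.mem_of_mem_erase hJ) h)
  have hne : J.Nonempty := Finset.nonempty_iff_ne_empty.2 (Finset.ne_of_mem_erase hJ)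
  have hle := sInf_sub_one_mul_suppWeight_le (p := p) (Finset.mem_insert_self j J)
  rw [suppWeight_eq_mul_erase (Finset.mem_insert_self j J), Finset.erase_insert hjJ] at hle ⊢
  rw [if_pos (by rw [Finset.card_insert_of_notMem hjJ]; have := hne.card_pos; omega)]
  linarith

lemma mixedBound_singleton_le [∀ i, Fact (p i).Prime] (j : ι) : mixedBound p {j} ≤ 0 := by
  classical
  simpa [mixedBound_empty] using mixedBound_insert_le (p := p) (Finset.notMem_empty j)

lemma mixedBound_lt_of_le [DecidableEq ι] [∀ i, Fact (p i).Prime] {a b c : ι} (hab : a ≠ b)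
    (hac : a ≠ c) (hbc : b ≠ c) (hle : p a ≤ p c) :
    mixedBound p {a, b, c} < ∑ i ∈ {a, b, c}, (p i : ℝ)⁻¹ + suppWeight p {a, b, c} := by
  have ha : a ∉ ({b, c} : Finset ι) := by simp [hab, hac]
  have hb : b ∉ ({c} : Finset ι) := by simpa using hbc
  have habc := mixedBound_insert_le (p := p) ha
  have hbc' := mixedBound_insert_le (p := p) hb
  have hc := mixedBound_singleton_le (p := p) c
  have hpos (i : ι) : 0 < (p i : ℝ)⁻¹ := inv_cast_pos i
  have hinv : (p c : ℝ)⁻¹ ≤ (p a : ℝ)⁻¹ := by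
    have := inv_pos.1 (hpos a)
    gcongr
  rw [Finset.prod_pair hbc] at habc
  rw [Finset.prod_singleton] at hbc'
  rw [suppWeight, Finset.prod_insert ha, Finset.sum_insert ha, Finset.prod_pair hbc,
    Finset.sum_pair hbc]
  have := mul_pos (hpos a) (hpos b)
  have := mul_pos (hpos a) (hpos c)
  have := mul_pos (mul_pos (hpos a) (hpos b)) (hpos c)
  linarith

lemma mixedGap_of_card_le_three [Fintype ι] [∀ i, Fact (p i).Prime] (hι : Fintype.card ι ≤ 3) :
    MixedGap p := by
  classical
  intro I hI
  have hpos (i : ι) : 0 < (p i : ℝ)⁻¹ := inv_cast_pos i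
  have hcard : I.card ≤ 3 := I.card_le_univ.trans hι
  have hcard0 := hI.card_pos
  interval_cases hn : I.card
  · obtain ⟨a, rfl⟩ := Finset.card_eq_one.1 hn
    rw [Finset.sum_singleton]
    linarith [mixedBound_singleton_le (p := p) a, hpos a, suppWeight_pos (p := p) {a}]
  · obtain ⟨a, b, hab, rfl⟩ := Finset.card_eq_two.1 hn
    have ha := mixedBound_insert_le (p := p) (I := {b}) (by simpa using hab)
    rw [Finset.prod_singleton] at ha
    rw [Finset.sum_pair hab]
    linarith [mixedBound_singleton_le (p := p) b, hpos a, mul_pos (hpos a) (hpos b),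
      suppWeight_pos (p := p) {a, b}]
  · obtain ⟨a, b, c, hab, hac, hbc, rfl⟩ := Finset.card_eq_three.1 hn
    obtain hle | hle := le_total (p a) (p c)
    · exact mixedBound_lt_of_le hab hac hbc hle
    · rw [Finset.insert_comm a, Finset.pair_comm a, Finset.insert_comm b]
      exact mixedBound_lt_of_le hbc.symm hac.symm hab.symm hle

variable [Fintype ι] {U : Multiset (∀ i, ZMod (p i))}

lemma weight_eq_sum_count [DecidableEq ι] (hU : ∀ x ∈ U, supp x ⊆ I) :
    weight U = ∑ J ∈ I.powerset, ((U.map supp).count J : ℝ) * suppWeight p J := by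
  rw [weight_eq_sum_map_supp, Finset.sum_multiset_map_count]
  simp only [nsmul_eq_mul]
  refine Finset.sum_subset (fun J hJ => ?_) fun J _ hJ => ?_
  · obtain ⟨x, hx, rfl⟩ := Multiset.mem_map.1 (Multiset.mem_toFinset.1 hJ)
    exact Finset.mem_powerset.2 (hU x hx)
  · rw [Multiset.count_eq_zero_of_notMem (by simpa using hJ), Nat.cast_zero, zero_mul]

variable [∀ i, Fact (p i).Prime]

lemma weight_lt_standardWeight [DecidableEq ι] (hgap : MixedGap p) (hI : I.Nonempty)
    (hU : ∀ x ∈ U, supp x ⊆ I) (h0 : 0 ∉ U) (hsingle : ∀ i ∈ I, (U.map supp).count {i} + 1 < p i)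
    (hmixed : ∀ J ⊆ I, 1 < J.card → ∀ j ∈ J, (U.map supp).count J < p j) :
    weight U < standardWeight p I := by
  have hempty : (U.map supp).count ∅ = 0 := by
    simpa [Multiset.count_eq_zero, supp_eq_empty] using h0
  have hs : ∑ i ∈ I, ((U.map supp).count {i} : ℝ) * suppWeight p {i} ≤
      ∑ i ∈ I, (1 - 2 * (p i : ℝ)⁻¹) := by
    refine Finset.sum_le_sum fun i hi => ?_
    have hp : (p i : ℝ) ≠ 0 := NeZero.ne _
    have hc : ((U.map supp).count {i} : ℝ) ≤ p i - 2 := by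
      rw [le_sub_iff_add_le]
      exact_mod_cast hsingle i hi
    calc ((U.map supp).count {i} : ℝ) * suppWeight p {i}
        ≤ (p i - 2) * (p i : ℝ)⁻¹ := by
          rw [suppWeight_singleton]
          gcongr
      _ = 1 - 2 * (p i : ℝ)⁻¹ := by rw [sub_mul, mul_inv_cancel₀ hp]
  have hm : ∑ J ∈ I.powerset with 1 < J.card, ((U.map supp).count J : ℝ) * suppWeight p J ≤
      mixedBound p I := by
    refine Finset.sum_le_sum fun J hJ => ?_
    obtain ⟨hJI, hJ⟩ := Finset.mem_filter.1 hJ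
    have hne : J.Nonempty := Finset.card_pos.1 (zero_lt_one.trans hJ)
    obtain ⟨j, hj, hpj⟩ := Nat.sInf_mem (hne.to_set.image p)
    refine mul_le_mul_of_nonneg_right ?_ (suppWeight_pos J).le
    rw [le_sub_iff_add_le, ← hpj]
    exact_mod_cast hmixed J (Finset.mem_powerset.1 hJI) hJ j hj
  have := hgap I hI
  rw [weight_eq_sum_count hU, sum_powerset_eq_add_sum_one_lt_card, hempty, standardWeight]
  simp only [Finset.sum_sub_distrib, ← Finset.mul_sum] at hs ⊢
  linarith

theorem IsHeavy.isStandard (hgap : MixedGap p) (hU : IsHeavy I U) : IsStandard I U := by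
  classical
  induction I using Finset.strongInduction generalizing U with | H I ihI =>
  induction hn : Multiset.card U using Nat.strong_induction_on generalizing U with | _ n ihU =>
  subst hn
  obtain rfl | hI := I.eq_empty_or_nonempty
  · exact hU.isStandard_empty
  by_cases hcount : ∃ i ∈ I, p i - 1 ≤ (U.map supp).count {i}
  · obtain ⟨i, hi, hle⟩ := hcount
    obtain ⟨A, hAU, hAc, hA⟩ := exists_le_of_le_count_map hle
    obtain ⟨R, rfl⟩ := Multiset.le_iff_exists_add.1 hAU
    have hc : Multiset.card A + 1 = p i := by
      rw [hAc, Nat.sub_add_cancel (Fact.out : (p i).Prime).one_le]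
    exact hU.isStandard_of_map_eraseCoord hi hA hc
      (ihI _ (Finset.erase_ssubset hi) (hU.map_eraseCoord hi hA hc))
  · push Not at hcount
    have hsingle : ∀ i ∈ I, (U.map supp).count {i} + 1 < p i := fun i hi =>
      Nat.add_lt_of_lt_sub (hcount i hi)
    have hmixed : ∀ J ⊆ I, 1 < J.card → ∀ j ∈ J, (U.map supp).count J < p j :=
      fun J hJI hJ j hj => hU.count_lt (fun V hV hVI => ihU _ hV hVI rfl) hJ hj
        (hsingle j (hJI hj))
    exact absurd hU.le_weight (not_le.2 (weight_lt_standardWeight hgap hI hU.supp_subset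
      (fun h0 => hI.ne_empty (hU.eq_empty h0)) hsingle hmixed))

end Counting

section Extremal

variable {ι : Type*} [Fintype ι] {p : ι → ℕ} [∀ i, Fact (p i).Prime]

lemma count_single_sum_replicate_single [DecidableEq ι] (i : ι) :
    (∑ j, Multiset.replicate (p j - 1) (Pi.single j 1 : ∀ j, ZMod (p j))).count (Pi.single i 1) =
      p i - 1 := by
  rw [Multiset.count_sum', Finset.sum_eq_single_of_mem i (Finset.mem_univ i),
    Multiset.count_replicate_self]
  intro j _ hji
  refine Multiset.count_eq_zero_of_notMem fun hmem => hji ?_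
  have hsupp := congrArg supp (Multiset.eq_of_mem_replicate hmem)
  rw [supp_single one_ne_zero, supp_single one_ne_zero] at hsupp
  exact (Finset.singleton_injective hsupp).symm

lemma isZeroSumFree_sum_replicate_single [DecidableEq ι] : IsZeroSumFree
    (∑ i, Multiset.replicate (p i - 1) (Pi.single i 1 : ∀ i, ZMod (p i))) := by
  intro T hT hT0 hsum
  have hmem : ∀ x ∈ T, ∃ i, x = Pi.single i 1 := fun x hx => by
    obtain ⟨i, -, hi⟩ := Multiset.mem_sum.1 (Multiset.mem_of_le hT hx)
    exact ⟨i, Multiset.eq_of_mem_replicate hi⟩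
  obtain ⟨x, hx⟩ := Multiset.exists_mem_of_ne_zero hT0
  obtain ⟨i, rfl⟩ := hmem x hx
  set e : ∀ i, ZMod (p i) := Pi.single i 1 with he
  have hcount : T.count e < p i :=
    (Multiset.count_le_of_le e hT).trans_lt <| by
      rw [count_single_sum_replicate_single]
      exact Nat.pred_lt (NeZero.ne _)
  have hrest : (T.filter (¬ · = e)).sum i = 0 := by
    refine map_sum_eq_zero (f := Pi.evalAddMonoidHom _ i) (S := T.filter (¬ · = e)) fun y hy => ?_
    obtain ⟨hyT, hye⟩ := Multiset.mem_filter.1 hy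
    obtain ⟨j, rfl⟩ := hmem y hyT
    exact Pi.single_eq_of_ne (by rintro rfl; exact hye rfl) _
  have hzero : ((T.count e : ℕ) : ZMod (p i)) = 0 := by
    have hTi := congrFun hsum i
    rw [← Multiset.filter_add_not (· = e) T, Multiset.filter_eq', Multiset.sum_add, Pi.add_apply,
      hrest] at hTi
    simpa [he] using hTi
  exact (Nat.le_of_dvd (Multiset.count_pos.2 hx) ((ZMod.natCast_eq_zero_iff _ _).1 hzero)).not_gt
    hcount

lemma exists_isMinZeroSum_isStandard_univ (p : ι → ℕ) [∀ i, Fact (p i).Prime] :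
    ∃ U : Multiset (∀ i, ZMod (p i)), IsMinZeroSum U ∧ IsStandard Finset.univ U := by
  classical
  set S := ∑ i, Multiset.replicate (p i - 1) (Pi.single i 1 : ∀ i, ZMod (p i)) with hS
  refine ⟨1 ::ₘ S, isMinZeroSum_cons.2 ⟨isZeroSumFree_sum_replicate_single, ?_⟩, ?_⟩
  · ext i
    have hoff : ∀ j ≠ i, ((p j - 1 : ℕ) • (Pi.single j 1 : ∀ j, ZMod (p j))) i = 0 :=
      fun j hj => by simp [hj.symm]
    rw [hS, Multiset.sum_sum, Pi.add_apply, Finset.sum_apply, Finset.sum_eq_single i]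
    · simp [Nat.cast_pred (NeZero.pos (p i))]
    · simpa only [Multiset.sum_replicate] using fun j _ => hoff j
    · simp
  · have hone : supp (1 : ∀ i, ZMod (p i)) = Finset.univ := by ext i; simp
    rw [IsStandard, Multiset.map_cons, hone, hS, ← Multiset.coe_mapAddMonoidHom, map_sum]
    simp [supp_single]

variable [Nontrivial ι] {U : Multiset (∀ i, ZMod (p i))}

lemma IsMinZeroSum.isHeavy_univ (hU : IsMinZeroSum U)
    (hw : standardWeight p Finset.univ ≤ weight U) : IsHeavy Finset.univ U := by
  refine ⟨hU, fun _ _ => Finset.subset_univ _, fun h0 => absurd hw (not_le.2 ?_), hw⟩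
  rw [hU.eq_singleton_zero h0, weight_singleton, supp_eq_empty.2 rfl, suppWeight_empty]
  exact one_lt_standardWeight (Finset.card_univ (α := ι) ▸ Fintype.one_lt_card)

theorem bigK_eq_standardWeight (hp : Function.Injective p) (hgap : MixedGap p) :
    bigK (∀ i, ZMod (p i)) = standardWeight p Finset.univ := by
  refine IsGreatest.csSup_eq ⟨?_, ?_⟩
  · obtain ⟨U, hU, hstd⟩ := exists_isMinZeroSum_isStandard_univ p
    exact ⟨U, hU, by rw [crossNum_eq_weight hp, hstd.weight_eq]⟩
  · rintro _ ⟨U, hU, rfl⟩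
    rw [crossNum_eq_weight hp]
    by_contra! hlt
    exact hlt.ne' ((hU.isHeavy_univ hlt.le).isStandard hgap).weight_eq

theorem IsMinZeroSum.isStandard_of_crossNum_eq_bigK (hp : Function.Injective p) (hgap : MixedGap p)
    (hU : IsMinZeroSum U) (hmax : crossNum U = bigK (∀ i, ZMod (p i))) :
    IsStandard Finset.univ U := by
  rw [crossNum_eq_weight hp, bigK_eq_standardWeight hp hgap] at hmax
  exact (hU.isHeavy_univ hmax.ge).isStandard hgap

end Extremal

section Transport

variable {G H : Type*} [AddCommGroup G] [AddCommGroup H]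

lemma crossNum_map_addEquiv (e : G ≃+ H) (S : Multiset G) : crossNum (S.map e) = crossNum S := by
  simp [crossNum]

lemma bigK_congr (e : G ≃+ H) : bigK G = bigK H := by
  refine congrArg sSup (Set.ext fun x => ⟨?_, ?_⟩)
  · rintro ⟨S, hS, rfl⟩
    exact ⟨S.map e, hS.map_addEquiv e, crossNum_map_addEquiv e S⟩
  · rintro ⟨S, hS, rfl⟩
    exact ⟨S.map e.symm, hS.map_addEquiv e.symm, crossNum_map_addEquiv e.symm S⟩

end Transport

theorem maximal_minimal_zero_sum_structure_three_primes_general {ι G : Type*} [Fintype ι]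
    [Nontrivial ι] [AddCommGroup G] {p : ι → ℕ} [∀ i, Fact (p i).Prime]
    (hp : Function.Injective p) (hgap : MixedGap p) (e : G ≃+ ∀ i, ZMod (p i)) {U : Multiset G}
    (hU : IsMinZeroSum U) (hmax : crossNum U = bigK G) :
    ∃ (g : G) (V : ι → Multiset G), U = g ::ₘ ∑ i, V i ∧ addOrderOf g = ∏ i, p i ∧
      (∀ i, ∀ x ∈ V i, ∀ j ≠ i, e x j = 0) ∧ ∀ i, IsZeroSumFree (V i) := by
  classical
  have hstd : IsStandard Finset.univ (U.map e) :=
    (hU.map_addEquiv e).isStandard_of_crossNum_eq_bigK hp hgap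
      (by rw [crossNum_map_addEquiv, hmax, bigK_congr e])
  rw [IsStandard, Multiset.map_map, ← Multiset.map_eq_cons] at hstd
  obtain ⟨g, hgU, hg, hrest⟩ := hstd
  obtain ⟨V, hUV, hV⟩ := exists_sum_of_map_eq_sum hrest
  have hUg : U = g ::ₘ ∑ i, V i := by rw [← hUV, Multiset.cons_erase hgU]
  have hfree : IsZeroSumFree (∑ i, V i) := (isMinZeroSum_cons.1 (hUg ▸ hU)).1
  refine ⟨g, V, hUg, ?_, fun i x hx j hj => ?_, fun i => hfree.of_le ?_⟩
  · have hsupp : supp (e g) = Finset.univ := hg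
    rw [← AddEquiv.addOrderOf_eq e, addOrderOf_eq_prod_supp hp, hsupp]
  · have hsupp : supp (e x) = {i} :=
      Multiset.eq_of_mem_replicate (hV i (Finset.mem_univ i) ▸ Multiset.mem_map_of_mem _ hx)
    by_contra hxj
    exact hj (Finset.mem_singleton.1 (hsupp ▸ mem_supp.2 hxj))
  · exact Finset.single_le_sum (fun _ _ => Multiset.zero_le _) (Finset.mem_univ i)

/-- The group `ZMod p × ZMod q × ZMod r` as a product indexed by `Fin 3`. -/
def zmodProdEquivPi (p q r : ℕ) : ZMod p × ZMod q × ZMod r ≃+ ∀ i, ZMod (![p, q, r] i) where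
  toFun x := Fin.cons x.1 (Fin.cons x.2.1 (Fin.cons x.2.2 finZeroElim))
  invFun x := (x 0, x 1, x 2)
  left_inv _ := rfl
  right_inv x := by
    ext i
    fin_cases i <;> rfl
  map_add' x y := by
    ext i
    fin_cases i <;> rfl

/-- For distinct primes `p, q, r` and `G = C_p ⊕ C_q ⊕ C_r`: every minimal zero-sum
sequence `U` over `G` with `k(U) = K(G)` has the form `U = g + Up + Uq + Ur` where `g`
is a single element of order `pqr` and `Up`, `Uq`, `Ur` are zero-sum free sequences
supported on the `p`-, `q`- and `r`-primary components of `G` respectively. -/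
theorem maximal_minimal_zero_sum_structure_three_primes
    (p q r : ℕ) (hp : p.Prime) (hq : q.Prime) (hr : r.Prime)
    (hpq : p ≠ q) (hpr : p ≠ r) (hqr : q ≠ r)
    (U : Multiset (ZMod p × ZMod q × ZMod r)) (hU : IsMinZeroSum U)
    (hmax : crossNum U = bigK (ZMod p × ZMod q × ZMod r)) :
    ∃ (g : ZMod p × ZMod q × ZMod r) (Up Uq Ur : Multiset (ZMod p × ZMod q × ZMod r)),
      U = g ::ₘ (Up + Uq + Ur) ∧ addOrderOf g = p * q * r ∧
        (∀ x ∈ Up, x.2 = 0) ∧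
        (∀ x ∈ Uq, x.1 = 0 ∧ x.2.2 = 0) ∧
        (∀ x ∈ Ur, x.1 = 0 ∧ x.2.1 = 0) ∧
        IsZeroSumFree Up ∧ IsZeroSumFree Uq ∧ IsZeroSumFree Ur := by
  have (i : Fin 3) : Fact (![p, q, r] i).Prime := ⟨by fin_cases i <;> assumption⟩
  have hinj : Function.Injective ![p, q, r] := by
    simp [Function.Injective, Fin.forall_fin_succ, hpq, hpr, hqr, hpq.symm, hpr.symm, hqr.symm]
  obtain ⟨g, V, hUV, hg, hV, hfree⟩ := maximal_minimal_zero_sum_structure_three_primes_general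
    hinj (mixedGap_of_card_le_three (by simp)) (zmodProdEquivPi p q r) hU hmax
  refine ⟨g, V 0, V 1, V 2, by rw [hUV, Fin.sum_univ_three], by rw [hg, Fin.prod_univ_three]; rfl,
    fun x hx => Prod.ext ?_ ?_, fun x hx => ⟨?_, ?_⟩, fun x hx => ⟨?_, ?_⟩,
    hfree 0, hfree 1, hfree 2⟩
  exacts [hV 0 x hx 1 (by decide), hV 0 x hx 2 (by decide), hV 1 x hx 0 (by decide),
    hV 1 x hx 2 (by decide), hV 2 x hx 0 (by decide), hV 2 x hx 1 (by decide)]
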